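/- Let ρ : ℝ³ → ℝ be smooth with compact support, and let V_ρ(x) = ∫_{ℝ³} ρ(y)/‖x − y‖ dy be its Newtonian (Hartree) potential. Then V_ρ is twice continuously differentiable on ℝ³ and satisfies the Poisson equation Δ V_ρ(x) = −4π ρ(x) for every x ∈ ℝ³. -/

import Mathlib

/-!
The potential is the convolution of the locally integrable kernel `‖x‖⁻¹` with `ρ`, so all
derivatives can be moved onto `ρ`: `V_ρ` is as smooth as `ρ`, and `∂ᵢ∂ᵢ V_ρ = V_{∂ᵢ∂ᵢ ρ}`. After a
translation the Poisson equation becomes `∫ ‖y‖⁻¹ Δφ(y) dy = -4π φ(0)` for `φ` of class `C²` with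
compact support (`sum_integral_inv_norm_mul`).

The kernel is singular at `0`, so it is replaced by the smooth kernel `(‖y‖² + a)^(-1/2)`, against
which two integrations by parts are allowed. The Laplacian of this kernel is
`-3 a (‖y‖² + a)^(-5/2)` (`sum_partialD_partialD_inv_regNorm`); with `a = c⁻²` it equals
`-4π c³ ψ(c y)`, where `ψ(y) = 3/(4π) (1 + ‖y‖²)^(-5/2)` has integral one by polar coordinates.
As `c → ∞` this is `-4π` times an approximate identity (`tendsto_integral_laplacian_regNorm`),
while the regularised integral tends to the singular one by dominated convergence
(`tendsto_integral_inv_regNorm`).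
-/


noncomputable section

open MeasureTheory Real

/-- The ambient space `ℝ³`. -/
abbrev E3 := EuclideanSpace ℝ (Fin 3)

/-- The Newtonian (Hartree) potential `V_ρ(x) = ∫ ρ(y)/‖x - y‖ dy`. -/
def newtonianPotential (ρ : E3 → ℝ) (x : E3) : ℝ := ∫ y : E3, ρ y / ‖x - y‖

/-- The Laplacian: the sum of the second partial derivatives. -/
def laplacian (f : E3 → ℝ) (x : E3) : ℝ :=
  ∑ i : Fin 3,
    fderiv ℝ (fun y => fderiv ℝ f y (EuclideanSpace.single i 1)) x (EuclideanSpace.single i 1)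

open Filter Topology Set

/-- The `i`-th partial derivative of `f`. -/
def partialD (i : Fin 3) (f : E3 → ℝ) (x : E3) : ℝ :=
  fderiv ℝ f x (EuclideanSpace.single i 1)

lemma ContDiff.partialD {n m : WithTop ℕ∞} {f : E3 → ℝ} (hf : ContDiff ℝ n f) (h : m + 1 ≤ n)
    (i : Fin 3) : ContDiff ℝ m (partialD i f) :=
  (hf.fderiv_right h).clm_apply contDiff_const

lemma HasCompactSupport.partialD {f : E3 → ℝ} (hf : HasCompactSupport f) (i : Fin 3) :
    HasCompactSupport (partialD i f) :=
  hf.fderiv_apply (𝕜 := ℝ) _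

lemma finrank_E3 : Module.finrank ℝ E3 = 3 := by simp

lemma volume_real_unitBall : (volume : Measure E3).real (Metric.ball 0 1) = π * 4 / 3 := by
  rw [Measure.real, EuclideanSpace.volume_ball_fin_three]
  simp only [ENNReal.ofReal_one, one_pow, one_mul]
  exact ENNReal.toReal_ofReal (by positivity)

lemma locallyIntegrable_inv_norm : LocallyIntegrable (fun x : E3 => ‖x‖⁻¹) := by
  rw [locallyIntegrable_iff]
  intro k hk
  obtain ⟨r, hr⟩ := hk.isBounded.subset_ball 0
  refine IntegrableOn.mono_set ?_ hr
  rw [integrableOn_fun_norm_addHaar (volume : Measure E3) (f := fun y => y⁻¹), finrank_E3]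
  have h : IntegrableOn (fun y : ℝ => y) (Ioo 0 r) :=
    (continuous_id.integrableOn_Icc (a := 0) (b := r)).mono_set Ioo_subset_Icc_self
  refine h.congr_fun (fun y hy => ?_) measurableSet_Ioo
  have : y ≠ 0 := hy.1.ne'
  simp only [smul_eq_mul]
  field_simp

lemma integrable_inv_norm_mul {f : E3 → ℝ} (hf : Continuous f) (hs : HasCompactSupport f) :
    Integrable (fun x : E3 => ‖x‖⁻¹ * f x) :=
  locallyIntegrable_inv_norm.integrable_smul_right_of_hasCompactSupport hf hs

/-! ### Differentiating the potential under the integral sign -/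

lemma newtonianPotential_eq_convolution (ρ : E3 → ℝ) :
    newtonianPotential ρ =
      convolution (fun x : E3 => ‖x‖⁻¹) ρ (ContinuousLinearMap.mul ℝ ℝ) volume := by
  ext x
  rw [convolution_eq_swap, newtonianPotential]
  refine integral_congr_ae (Eventually.of_forall fun y => ?_)
  simp [div_eq_mul_inv, mul_comm]

lemma partialD_newtonianPotential {ρ : E3 → ℝ} (hρ : ContDiff ℝ 1 ρ) (hs : HasCompactSupport ρ)
    (i : Fin 3) : partialD i (newtonianPotential ρ) = newtonianPotential (partialD i ρ) := by
  ext x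
  rw [newtonianPotential_eq_convolution, newtonianPotential_eq_convolution, partialD,
    (hs.hasFDerivAt_convolution_right _ locallyIntegrable_inv_norm hρ x).fderiv,
    convolution_precompR_apply _ locallyIntegrable_inv_norm (hs.fderiv ℝ)
      (hρ.continuous_fderiv one_ne_zero)]
  rfl

/-! ### The regularised kernel -/

/-- The regularised norm `√(a + ‖x‖²)`. -/
def regNorm (a : ℝ) (x : E3) : ℝ := √(a + ‖x‖ ^ 2)

lemma regNorm_pos {a : ℝ} (ha : 0 < a) (x : E3) : 0 < regNorm a x := by
  unfold regNorm; positivity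

lemma regNorm_sq {a : ℝ} (ha : 0 < a) (x : E3) : regNorm a x ^ 2 = a + ‖x‖ ^ 2 :=
  Real.sq_sqrt (by positivity)

lemma norm_le_regNorm {a : ℝ} (ha : 0 < a) (x : E3) : ‖x‖ ≤ regNorm a x :=
  Real.le_sqrt_of_sq_le (by linarith)

lemma contDiff_regNorm {a : ℝ} (ha : 0 < a) {n : WithTop ℕ∞} : ContDiff ℝ n (regNorm a) :=
  (contDiff_const.add (contDiff_norm_sq ℝ)).sqrt fun x => by positivity

lemma contDiff_inv_regNorm {a : ℝ} (ha : 0 < a) {n : WithTop ℕ∞} :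
    ContDiff ℝ n (fun x => (regNorm a x)⁻¹) :=
  (contDiff_regNorm ha).inv fun x => (regNorm_pos ha x).ne'

lemma hasFDerivAt_regNorm {a : ℝ} (ha : 0 < a) (x : E3) :
    HasFDerivAt (regNorm a) ((regNorm a x)⁻¹ • innerSL ℝ x) x := by
  have h := ((hasStrictFDerivAt_norm_sq x).hasFDerivAt.const_add a).sqrt
    (by positivity : a + ‖x‖ ^ 2 ≠ 0)
  refine h.congr_fderiv ?_
  ext v
  have := (regNorm_pos ha x).ne'
  simp only [regNorm] at this ⊢
  simp
  field_simp

lemma partialD_inv_regNorm {a : ℝ} (ha : 0 < a) (i : Fin 3) :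
    partialD i (fun x => (regNorm a x)⁻¹) = fun x => -(x i / regNorm a x ^ 3) := by
  ext x
  have hq := (regNorm_pos ha x).ne'
  have h := (hasDerivAt_inv hq).comp_hasFDerivAt x (hasFDerivAt_regNorm ha x)
  rw [partialD, show (fun x => (regNorm a x)⁻¹) = (fun y => y⁻¹) ∘ regNorm a from rfl, h.fderiv]
  simp [EuclideanSpace.inner_single_right]
  field_simp

lemma partialD_partialD_inv_regNorm {a : ℝ} (ha : 0 < a) (i : Fin 3) (x : E3) :
    partialD i (partialD i (fun x => (regNorm a x)⁻¹)) x =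
      3 * x i ^ 2 / regNorm a x ^ 5 - 1 / regNorm a x ^ 3 := by
  have hq := (regNorm_pos ha x).ne'
  rw [partialD_inv_regNorm ha]
  have h1 : HasFDerivAt (fun x : E3 => x i) (EuclideanSpace.proj i : E3 →L[ℝ] ℝ) x :=
    (EuclideanSpace.proj i : E3 →L[ℝ] ℝ).hasFDerivAt
  have h := (h1.mul ((hasDerivAt_inv (pow_ne_zero 3 hq)).comp_hasFDerivAt x
    ((hasFDerivAt_regNorm ha x).pow 3))).neg
  rw [partialD, show (fun x : E3 => -(x i / regNorm a x ^ 3)) =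
    -((fun x : E3 => x i) * ((fun y => y⁻¹) ∘ fun x => regNorm a x ^ 3)) from rfl, h.fderiv]
  simp [EuclideanSpace.inner_single_right]
  field_simp
  ring

/-- `Δ (‖x‖² + a)^(-1/2) = -3 a (‖x‖² + a)^(-5/2)`: the regularisation of `Δ ‖x‖⁻¹ = 0`. -/
lemma sum_partialD_partialD_inv_regNorm {a : ℝ} (ha : 0 < a) (x : E3) :
    ∑ i, partialD i (partialD i (fun x => (regNorm a x)⁻¹)) x = -(3 * a) / regNorm a x ^ 5 := by
  have hq := (regNorm_pos ha x).ne'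
  simp only [partialD_partialD_inv_regNorm ha, Fin.sum_univ_three]
  have h1 : x 0 ^ 2 + x 1 ^ 2 + x 2 ^ 2 = regNorm a x ^ 2 - a := by
    rw [regNorm_sq ha, EuclideanSpace.norm_sq_eq, Fin.sum_univ_three]
    simp
  field_simp
  linear_combination 3 * h1

/-! ### Green's identity against the regularised kernel -/

lemma integral_mul_partialD {f g : E3 → ℝ} (hf : ContDiff ℝ 1 f) (hg : ContDiff ℝ 1 g)
    (hs : HasCompactSupport g) (i : Fin 3) :
    ∫ x, f x * partialD i g x = -∫ x, partialD i f x * g x := by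
  have hf' : ContDiff ℝ 0 (partialD i f) := hf.partialD (by simp) i
  have hg' : ContDiff ℝ 0 (partialD i g) := hg.partialD (by simp) i
  exact integral_mul_fderiv_eq_neg_fderiv_mul_of_integrable
    ((hf'.continuous.mul hg.continuous).integrable_of_hasCompactSupport hs.mul_left)
    ((hf.continuous.mul hg'.continuous).integrable_of_hasCompactSupport (hs.partialD i).mul_left)
    ((hf.continuous.mul hg.continuous).integrable_of_hasCompactSupport hs.mul_left)
    (fun x _ => hf.differentiable one_ne_zero x) (fun x _ => hg.differentiable one_ne_zero x)

lemma integral_mul_partialD_partialD {f g : E3 → ℝ} (hf : ContDiff ℝ 2 f) (hg : ContDiff ℝ 2 g)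
    (hs : HasCompactSupport g) (i : Fin 3) :
    ∫ x, f x * partialD i (partialD i g) x = ∫ x, partialD i (partialD i f) x * g x := by
  have h2 : (1 : WithTop ℕ∞) + 1 ≤ 2 := by norm_num
  rw [integral_mul_partialD (hf.of_le one_le_two) (hg.partialD h2 i) (hs.partialD i),
    integral_mul_partialD (hf.partialD h2 i) (hg.of_le one_le_two) hs, neg_neg]

lemma sum_integral_inv_regNorm_mul {a : ℝ} (ha : 0 < a) {φ : E3 → ℝ} (hφ : ContDiff ℝ 2 φ)
    (hs : HasCompactSupport φ) :
    ∑ i, ∫ x, (regNorm a x)⁻¹ * partialD i (partialD i φ) x =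
      ∫ x, -(3 * a) / regNorm a x ^ 5 * φ x := by
  have hg : ContDiff ℝ 2 (fun x => (regNorm a x)⁻¹) := contDiff_inv_regNorm ha
  simp only [integral_mul_partialD_partialD hg hφ hs]
  rw [← integral_finsetSum]
  · simp only [← Finset.sum_mul, sum_partialD_partialD_inv_regNorm ha]
  · intro i _
    have h1 : ContDiff ℝ 1 (partialD i (fun x => (regNorm a x)⁻¹)) := hg.partialD (by norm_num) i
    have h0 : ContDiff ℝ 0 (partialD i (partialD i (fun x => (regNorm a x)⁻¹))) :=
      h1.partialD (by simp) i
    exact (h0.continuous.mul hφ.continuous).integrable_of_hasCompactSupport hs.mul_left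

/-! ### The Laplacian of the regularised kernel as an approximate identity -/

lemma integral_Ioi_sq_div : ∫ r in Ioi (0 : ℝ), r ^ 2 * (√(1 + r ^ 2) ^ 5)⁻¹ = 1 / 3 := by
  have hd : ∀ r ∈ Ici (0 : ℝ), HasDerivAt (fun r : ℝ => (r / √(1 + r ^ 2)) ^ 3 / 3)
      (r ^ 2 * (√(1 + r ^ 2) ^ 5)⁻¹) r := by
    intro r _
    have hp : 0 < 1 + r ^ 2 := by positivity
    have hq : √(1 + r ^ 2) ≠ 0 := by positivity
    have hq2 : √(1 + r ^ 2) ^ 2 = 1 + r ^ 2 := Real.sq_sqrt hp.le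
    have h := ((((hasDerivAt_id r).div ((((hasDerivAt_id r).pow 2).const_add 1).sqrt hp.ne')
      hq).pow 3).div_const 3)
    refine h.congr_deriv ?_
    simp
    field_simp
    linear_combination r ^ 2 * hq2
  have hlim : Tendsto (fun r : ℝ => (r / √(1 + r ^ 2)) ^ 3 / 3) atTop (𝓝 (1 / 3)) := by
    have h1 : Tendsto (fun r : ℝ => √((r ^ 2)⁻¹ + 1)) atTop (𝓝 1) := by
      have := ((tendsto_pow_atTop (α := ℝ) two_ne_zero).inv_tendsto_atTop.add_const 1).sqrt
      simpa using this
    have h2 : Tendsto (fun r : ℝ => r / √(1 + r ^ 2)) atTop (𝓝 1) := by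
      have h3 := h1.inv₀ one_ne_zero
      rw [inv_one] at h3
      refine h3.congr' ?_
      filter_upwards [eventually_gt_atTop 0] with r hr
      have : (r ^ 2)⁻¹ + 1 = (1 + r ^ 2) / r ^ 2 := by field_simp
      rw [this, Real.sqrt_div (by positivity), Real.sqrt_sq hr.le, inv_div]
    simpa using (h2.pow 3).div_const 3
  rw [integral_Ioi_of_hasDerivAt_of_nonneg' hd (fun r _ => by positivity) hlim]
  simp

lemma integral_inv_regNorm_one_pow : ∫ x, (regNorm 1 x ^ 5)⁻¹ = 4 * π / 3 := by
  have h := integral_fun_norm_addHaar (volume : Measure E3)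
    (fun r : ℝ => (√(1 + r ^ 2) ^ 5)⁻¹)
  rw [finrank_E3, volume_real_unitBall] at h
  simp only [smul_eq_mul, Nat.add_one_sub_one, integral_Ioi_sq_div, nsmul_eq_mul] at h
  unfold regNorm
  rw [h]
  push_cast
  ring

lemma tendsto_norm_pow_mul_inv_regNorm :
    Tendsto (fun x : E3 => ‖x‖ ^ 3 * (3 / (4 * π) * (regNorm 1 x ^ 5)⁻¹))
      (Bornology.cobounded E3) (𝓝 0) := by
  have h1 : Tendsto (fun x : E3 => 3 / (4 * π) * (‖x‖ ^ 2)⁻¹) (Bornology.cobounded E3) (𝓝 0) := by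
    have := (((tendsto_pow_atTop (α := ℝ) two_ne_zero).comp
      (tendsto_norm_cobounded_atTop (E := E3))).inv_tendsto_atTop).const_mul (3 / (4 * π))
    simpa using this
  refine squeeze_zero' (Eventually.of_forall fun x => ?_) ?_ h1
  · have := regNorm_pos one_pos x
    positivity
  · have hne : ∀ᶠ x : E3 in Bornology.cobounded E3, 0 < ‖x‖ :=
      tendsto_norm_cobounded_atTop.eventually_gt_atTop 0
    filter_upwards [hne] with x hx
    have hq := regNorm_pos one_pos x
    rw [mul_left_comm]
    gcongr
    rw [← div_eq_mul_inv, div_le_iff₀ (by positivity), inv_mul_eq_div, le_div_iff₀ (by positivity),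
      ← pow_add]
    exact pow_le_pow_left₀ hx.le (norm_le_regNorm one_pos x) 5

lemma regNorm_inv_sq {c : ℝ} (hc : 0 < c) (x : E3) :
    regNorm (c⁻¹ ^ 2) x = c⁻¹ * regNorm 1 (c • x) := by
  rw [regNorm, regNorm, norm_smul, Real.norm_of_nonneg hc.le,
    show c⁻¹ ^ 2 + ‖x‖ ^ 2 = c⁻¹ ^ 2 * (1 + (c * ‖x‖) ^ 2) by field_simp,
    Real.sqrt_mul (by positivity), Real.sqrt_sq (by positivity)]

lemma tendsto_integral_laplacian_regNorm {φ : E3 → ℝ} (hφ : Continuous φ)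
    (hs : HasCompactSupport φ) :
    Tendsto (fun c : ℝ => ∫ x, -(3 * c⁻¹ ^ 2) / regNorm (c⁻¹ ^ 2) x ^ 5 * φ x) atTop
      (𝓝 (-(4 * π) * φ 0)) := by
  have hpeak := tendsto_integral_comp_smul_smul_of_integrable (μ := (volume : Measure E3))
    (φ := fun x => 3 / (4 * π) * (regNorm 1 x ^ 5)⁻¹)
    (fun x => by have := regNorm_pos one_pos x; positivity)
    (by rw [integral_const_mul, integral_inv_regNorm_one_pow]; field_simp)
    (by rw [finrank_E3]; exact tendsto_norm_pow_mul_inv_regNorm)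
    (hφ.integrable_of_hasCompactSupport hs) hφ.continuousAt
  refine (hpeak.const_mul (-(4 * π))).congr' ?_
  filter_upwards [eventually_gt_atTop 0] with c hc
  rw [← integral_const_mul]
  refine integral_congr_ae (Eventually.of_forall fun x => ?_)
  have hq := (regNorm_pos one_pos (c • x)).ne'
  simp only [finrank_E3, smul_eq_mul, regNorm_inv_sq hc]
  field_simp

/-! ### The fundamental solution -/

lemma tendsto_integral_inv_regNorm {f : E3 → ℝ} (hf : Continuous f) (hs : HasCompactSupport f) :
    Tendsto (fun c : ℝ => ∫ x, (regNorm (c⁻¹ ^ 2) x)⁻¹ * f x) atTop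
      (𝓝 (∫ x, ‖x‖⁻¹ * f x)) := by
  refine tendsto_integral_filter_of_dominated_convergence (fun x => ‖‖x‖⁻¹ * f x‖) ?_ ?_
    (integrable_inv_norm_mul hf hs).norm ?_
  · filter_upwards [eventually_gt_atTop 0] with c hc
    exact ((contDiff_inv_regNorm (n := 0) (by positivity)).continuous.mul hf).aestronglyMeasurable
  · filter_upwards [eventually_gt_atTop 0] with c hc
    -- at `x = 0` the junk value `‖0‖⁻¹ = 0` breaks the bound
    filter_upwards [Measure.ae_ne volume (0 : E3)] with x hx
    have h0 : 0 < ‖x‖ := norm_pos_iff.2 hx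
    have hc2 : 0 < c⁻¹ ^ 2 := by positivity
    have hq := regNorm_pos hc2 x
    rw [norm_mul, norm_mul, Real.norm_of_nonneg (by positivity : 0 ≤ ‖x‖⁻¹),
      Real.norm_of_nonneg (by positivity : 0 ≤ (regNorm (c⁻¹ ^ 2) x)⁻¹)]
    gcongr
    exact norm_le_regNorm hc2 x
  · filter_upwards [Measure.ae_ne volume (0 : E3)] with x hx
    have h1 : Tendsto (fun c : ℝ => regNorm (c⁻¹ ^ 2) x) atTop (𝓝 ‖x‖) := by
      have := (((tendsto_inv_atTop_zero (𝕜 := ℝ)).pow 2).add_const (‖x‖ ^ 2)).sqrt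
      simpa [regNorm] using this
    exact (h1.inv₀ (norm_ne_zero_iff.2 hx)).mul_const _

/-- `-(4π)⁻¹ ‖x‖⁻¹` is a fundamental solution of the Laplacian, tested against `C²` functions of
compact support. -/
lemma sum_integral_inv_norm_mul {φ : E3 → ℝ} (hφ : ContDiff ℝ 2 φ) (hs : HasCompactSupport φ) :
    ∑ i, ∫ x, ‖x‖⁻¹ * partialD i (partialD i φ) x = -(4 * π) * φ 0 := by
  have hL : Tendsto (fun c : ℝ => ∑ i, ∫ x, (regNorm (c⁻¹ ^ 2) x)⁻¹ * partialD i (partialD i φ) x)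
      atTop (𝓝 (∑ i, ∫ x, ‖x‖⁻¹ * partialD i (partialD i φ) x)) := by
    refine tendsto_finsetSum _ fun i _ => ?_
    have h1 : ContDiff ℝ 1 (partialD i φ) := hφ.partialD (by norm_num) i
    have h0 : ContDiff ℝ 0 (partialD i (partialD i φ)) := h1.partialD (by simp) i
    exact tendsto_integral_inv_regNorm h0.continuous ((hs.partialD i).partialD i)
  refine tendsto_nhds_unique hL ((tendsto_integral_laplacian_regNorm hφ.continuous hs).congr' ?_)
  filter_upwards [eventually_gt_atTop 0] with c hc
  exact (sum_integral_inv_regNorm_mul (by positivity) hφ hs).symm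

lemma partialD_comp_add_left (f : E3 → ℝ) (x : E3) (i : Fin 3) :
    partialD i (fun y => f (x + y)) = fun y => partialD i f (x + y) := by
  ext y
  rw [partialD, partialD, fderiv_comp_add_left]

lemma newtonianPotential_eq_translate (f : E3 → ℝ) (x : E3) :
    newtonianPotential f x = ∫ y, ‖y‖⁻¹ * f (x + y) := by
  rw [newtonianPotential, ← integral_add_left_eq_self _ x]
  refine integral_congr_ae (Eventually.of_forall fun y => ?_)
  simp [div_eq_mul_inv, mul_comm]

/-- If `ρ : ℝ³ → ℝ` is smooth with compact support, then its Newtonian potential is twice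
continuously differentiable and satisfies the Poisson equation `Δ V_ρ = -4π ρ`. -/
theorem newtonianPotential_contDiff_and_poisson (ρ : E3 → ℝ)
    (hρ : ContDiff ℝ (⊤ : ℕ∞) ρ) (hsupp : HasCompactSupport ρ) :
    ContDiff ℝ 2 (newtonianPotential ρ) ∧
      ∀ x : E3, laplacian (newtonianPotential ρ) x = -(4 * π) * ρ x := by
  have hρ2 : ContDiff ℝ 2 ρ := contDiff_infty.1 hρ 2
  refine ⟨?_, fun x => ?_⟩
  · rw [newtonianPotential_eq_convolution]
    exact hsupp.contDiff_convolution_right (n := 2) _ locallyIntegrable_inv_norm hρ2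
  · have hφ : ContDiff ℝ 2 (fun y => ρ (x + y)) := hρ2.comp (contDiff_const.add contDiff_id)
    have hs : HasCompactSupport (fun y => ρ (x + y)) :=
      hsupp.comp_homeomorph (Homeomorph.addLeft x)
    have key := sum_integral_inv_norm_mul hφ hs
    simp only [partialD_comp_add_left, add_zero] at key
    rw [← key]
    change ∑ i, partialD i (partialD i (newtonianPotential ρ)) x = _
    refine Finset.sum_congr rfl fun i _ => ?_
    rw [partialD_newtonianPotential (hρ2.of_le one_le_two) hsupp,
      partialD_newtonianPotential (hρ2.partialD (by norm_num) i) (hsupp.partialD i),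
      newtonianPotential_eq_translate]
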